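/- arXiv:1811.07317 — 4 statements merged into one kernel-verified Lean document; each statement's English description precedes it below -/
import Mathlib

section
/- Let (Z_n) be a branching process in the fixed environment (f_i) and (Z'_n) a branching process in the shifted environment (f_{1+i}), with almost-sure limits W(s)=lim_n Z_n·h_n(s) and W'(s)=lim_n Z'_n·h_n(θ,s). Then for every u > 0 and s ∈ (0,∞), the Laplace transforms χ(u;s):=E[exp(−u·W(s))] and χ'(u;s):=E[exp(−u·W'(s))] satisfy the functional equation χ(u;s) = f_0(χ'(u; h_0(s))). -/
open MeasureTheory Filter Topology Set
open scoped ENNReal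

noncomputable section

/-- `f` is the probability generating function `f(x) = ∑_{j≥1} p_j x^j` of a probability
distribution on the positive integers with `p 1 ≠ 1`. -/
def IsPGF (f : ℝ → ℝ) : Prop :=
  ∃ p : ℕ → ℝ, (∀ j, 0 ≤ p j) ∧ p 0 = 0 ∧ p 1 ≠ 1 ∧ HasSum p 1 ∧
    ∀ x ∈ Set.Icc (0 : ℝ) 1, HasSum (fun j => p j * x ^ j) (f x)

/-- `g` is the inverse of `f` on `[0,1]`. -/
def IsInvOn01 (g f : ℝ → ℝ) : Prop :=
  ∀ x ∈ Set.Icc (0 : ℝ) 1, g (f x) = x ∧ f (g x) = x ∧ g x ∈ Set.Icc (0 : ℝ) 1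

/-- `h(s) = -log f⁻¹(e^{-s})`, expressed through the inverse `g = f⁻¹`. -/
def hfun (g : ℝ → ℝ) (s : ℝ) : ℝ := - Real.log (g (Real.exp (-s)))

/-- `h_n(s) = h_{n-1}(⋯(h_0(s))⋯)`, built from the sequence `g i = f_i⁻¹` of inverses. -/
def hIter (g : ℕ → ℝ → ℝ) : ℕ → ℝ → ℝ
  | 0, s => s
  | n + 1, s => hfun (g (n : ℕ)) (hIter g n s)

/-- `(Z n)` is a branching process in the fixed environment given by the pgfs `f n`:
`Z 0 = 1`, each `Z n` is a positive-integer valued `F n`-measurable variable, and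
`E[t ^ Z (n+1) | F n] = (f n t) ^ Z n` a.s. for every `t ∈ [0,1]`. -/
def IsBranchingProcess {Ω : Type*} {mΩ : MeasurableSpace Ω} (μ : Measure Ω)
    (F : Filtration ℕ mΩ) (f : ℕ → ℝ → ℝ) (Z : ℕ → Ω → ℕ) : Prop :=
  (∀ ω, Z 0 ω = 1) ∧ (∀ n ω, 1 ≤ Z n ω) ∧ (∀ n, Measurable[F n] (Z n)) ∧
    ∀ n, ∀ t ∈ Set.Icc (0 : ℝ) 1,
      (μ[fun ω => t ^ Z (n + 1) ω | F n]) =ᵐ[μ] fun ω => f n t ^ Z n ω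

/-- `exp(-w)` for `w ∈ [0,∞]`, with the convention `exp(-∞) = 0`. -/
def expNeg (w : ℝ≥0∞) : ℝ := if w = ∞ then 0 else Real.exp (-w.toReal)

/-- `s ∈ (0,∞)` is a regular point (analytic definition):
`h_n(t)/h_n(s) → 0` for every `0 < t < s`. -/
def AnalyticRegular (g : ℕ → ℝ → ℝ) (s : ℝ) : Prop :=
  ∀ t, 0 < t → t < s → Tendsto (fun n => hIter g n t / hIter g n s) atTop (𝓝 0)

/-- `U` is slowly varying at infinity. -/
def SlowlyVarying (U : ℝ → ℝ) : Prop :=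
  ∀ lam : ℝ, 0 < lam → Tendsto (fun x => U (lam * x) / U x) atTop (𝓝 1)

/-- Generalized inverse `V(x) = inf{y ≥ 0 : U(y) ≥ x}`. -/
def Vfun (U : ℝ → ℝ) (x : ℝ) : ℝ := sInf {y : ℝ | 0 ≤ y ∧ x ≤ U y}

/-- Generalized inverse `G(x) = inf{y ≥ 0 : F(y) ≥ x}` of a distribution function. -/
def Gfun (F : ℝ → ℝ) (x : ℝ) : ℝ := sInf {y : ℝ | 0 ≤ y ∧ x ≤ F y}

/-- `Q(x) = f'(x)(1-x)/(1-f(x))`. -/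
def Qfun (f : ℝ → ℝ) (x : ℝ) : ℝ := deriv f x * (1 - x) / (1 - f x)

/-- Iterated inverse `f_n^{(-1)} = f_{n-1}^{(-1)} ∘ ⋯ ∘ f_0^{(-1)}`, the inverse of the
composition `f_n = f_0 ∘ f_1 ∘ ⋯ ∘ f_{n-1}`, built from the inverses `g i = f_i⁻¹`. -/
def fCompInv (g : ℕ → ℝ → ℝ) : ℕ → ℝ → ℝ
  | 0, t => t
  | n + 1, t => g n (fCompInv g n t)

/-!
Conditioning on the last generation turns `E[t ^ Z (n+1)]` into `E[(f n t) ^ Z n]`. Applying this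
to both processes and inducting on `n` gives `E[t ^ Z (n+1)] = f 0 (E'[t ^ Z' n])` for
`t ∈ [0,1]`. At `t = exp(-c (n+1))` this reads
`E[exp(-Z (n+1) · c (n+1))] = f 0 (E'[exp(-Z' n · c (n+1))])`, for any norming constants `c`, and
bounded convergence together with the continuity of `f 0` passes to the limit. The constants of the
theorem are `c n = u · h_n(s)`, for which `c (n+1) = u · h_n(θ, h_0(s))`.
-/

section ExpNeg

lemma expNeg_nonneg (w : ℝ≥0∞) : 0 ≤ expNeg w := by
  unfold expNeg
  split_ifs <;> positivity

lemma expNeg_le_one (w : ℝ≥0∞) : expNeg w ≤ 1 := by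
  unfold expNeg
  split_ifs <;> simp

lemma expNeg_mem_Icc (w : ℝ≥0∞) : expNeg w ∈ Icc (0 : ℝ) 1 :=
  ⟨expNeg_nonneg w, expNeg_le_one w⟩

lemma norm_expNeg_le_one (w : ℝ≥0∞) : ‖expNeg w‖ ≤ 1 := by
  rw [Real.norm_of_nonneg (expNeg_nonneg w)]
  exact expNeg_le_one w

lemma expNeg_natCast_mul (k : ℕ) (w : ℝ≥0∞) : expNeg (k * w) = expNeg w ^ k := by
  rcases eq_or_ne k 0 with rfl | hk
  · simp [expNeg]
  by_cases hw : w = ∞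
  · simp [expNeg, hw, hk]
  · simp [expNeg, hw, ENNReal.mul_eq_top, ← Real.exp_nat_mul]

lemma expNeg_eq_toReal_exp_neg (w : ℝ≥0∞) : expNeg w = (EReal.exp (-(w : EReal))).toReal := by
  induction w with
  | top => simp [expNeg]
  | coe w =>
    rw [EReal.coe_nnreal_eq_coe_real, ← EReal.coe_neg, EReal.exp_coe,
      ENNReal.toReal_ofReal (Real.exp_pos _).le]
    simp [expNeg]

lemma continuous_expNeg : Continuous expNeg := by
  have exp_neg_ne_top (w : ℝ≥0∞) : EReal.exp (-(w : EReal)) ≠ ∞ := by simp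
  rw [funext expNeg_eq_toReal_exp_neg]
  exact ENNReal.continuousOn_toReal.comp_continuous
    (ENNReal.continuous_exp.comp continuous_coe_ennreal_ereal.neg) exp_neg_ne_top

variable {Ω : Type*} {mΩ : MeasurableSpace Ω} {μ : Measure Ω}

lemma integral_expNeg_mem_Icc [IsProbabilityMeasure μ] (X : Ω → ℝ≥0∞) :
    ∫ ω, expNeg (X ω) ∂μ ∈ Icc (0 : ℝ) 1 := by
  refine ⟨integral_nonneg fun ω => expNeg_nonneg (X ω), (le_abs_self _).trans ?_⟩
  simpa using norm_integral_le_of_norm_le_const (μ := μ)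
    (Eventually.of_forall fun ω => norm_expNeg_le_one (X ω))

lemma tendsto_integral_expNeg [IsFiniteMeasure μ] {X : ℕ → Ω → ℝ≥0∞} {Y : Ω → ℝ≥0∞}
    (hX : ∀ n, AEMeasurable (X n) μ)
    (hXY : ∀ᵐ ω ∂μ, Tendsto (fun n => X n ω) atTop (𝓝 (Y ω))) :
    Tendsto (fun n => ∫ ω, expNeg (X n ω) ∂μ) atTop (𝓝 (∫ ω, expNeg (Y ω) ∂μ)) := by
  refine tendsto_integral_of_dominated_convergence (fun _ => 1) (fun n => ?_)
    (integrable_const _) (fun n => Eventually.of_forall fun ω => norm_expNeg_le_one (X n ω)) ?_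
  · exact (continuous_expNeg.measurable.comp_aemeasurable (hX n)).aestronglyMeasurable
  · filter_upwards [hXY] with ω hω using (continuous_expNeg.tendsto _).comp hω

end ExpNeg

namespace IsPGF

variable {f : ℝ → ℝ}

lemma map_zero (hf : IsPGF f) : f 0 = 0 := by
  obtain ⟨p, -, p_zero, -, -, hasSum_f⟩ := hf
  refine (hasSum_f 0 (by simp)).unique ?_
  convert hasSum_zero with j
  rcases j with _ | j <;> simp [p_zero]

lemma map_one (hf : IsPGF f) : f 1 = 1 := by
  obtain ⟨p, -, -, -, hasSum_p, hasSum_f⟩ := hf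
  exact (hasSum_f 1 (by simp)).unique (by simpa using hasSum_p)

lemma mapsTo_Icc (hf : IsPGF f) : MapsTo f (Icc 0 1) (Icc 0 1) := by
  obtain ⟨p, p_nonneg, -, -, hasSum_p, hasSum_f⟩ := hf
  intro x hx
  refine ⟨(hasSum_f x hx).nonneg fun j => mul_nonneg (p_nonneg j) (pow_nonneg hx.1 j), ?_⟩
  exact hasSum_le (fun j => mul_le_of_le_one_right (p_nonneg j) (pow_le_one₀ hx.1 hx.2))
    (hasSum_f x hx) hasSum_p

lemma continuousOn (hf : IsPGF f) : ContinuousOn f (Icc 0 1) := by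
  obtain ⟨p, p_nonneg, -, -, hasSum_p, hasSum_f⟩ := hf
  have norm_term_le (j : ℕ) (x : ℝ) (hx : x ∈ Icc (0 : ℝ) 1) : ‖p j * x ^ j‖ ≤ p j := by
    rw [Real.norm_of_nonneg (mul_nonneg (p_nonneg j) (pow_nonneg hx.1 j))]
    exact mul_le_of_le_one_right (p_nonneg j) (pow_le_one₀ hx.1 hx.2)
  have continuousOn_tsum_terms : ContinuousOn (fun x => ∑' j, p j * x ^ j) (Icc 0 1) :=
    continuousOn_tsum (fun j => by fun_prop) hasSum_p.summable norm_term_le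
  exact continuousOn_tsum_terms.congr fun x hx => (hasSum_f x hx).tsum_eq.symm

end IsPGF

lemma hfun_pos {f g : ℝ → ℝ} (hf : IsPGF f) (hg : IsInvOn01 g f) {s : ℝ} (hs : 0 < s) :
    0 < hfun g s := by
  have exp_lt_one : Real.exp (-s) < 1 := by simpa using hs
  obtain ⟨-, f_g_eq, g_nonneg, g_le_one⟩ := hg (Real.exp (-s)) ⟨(Real.exp_pos _).le, exp_lt_one.le⟩
  have g_ne_zero : g (Real.exp (-s)) ≠ 0 := fun g_eq_zero => by
    rw [g_eq_zero, hf.map_zero] at f_g_eq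
    exact (Real.exp_pos _).ne f_g_eq
  have g_ne_one : g (Real.exp (-s)) ≠ 1 := fun g_eq_one => by
    rw [g_eq_one, hf.map_one] at f_g_eq
    exact exp_lt_one.ne' f_g_eq
  exact neg_pos.2 (Real.log_neg (g_nonneg.lt_of_ne' g_ne_zero) (g_le_one.lt_of_ne g_ne_one))

lemma hIter_succ_eq_hIter_shift (g : ℕ → ℝ → ℝ) (n : ℕ) (s : ℝ) :
    hIter g (n + 1) s = hIter (fun i => g (1 + i)) n (hfun (g 0) s) := by
  induction n with
  | zero => rfl
  | succ n ih => rw [hIter, ih, hIter, add_comm 1 n]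

namespace IsBranchingProcess

variable {Ω Ω' : Type*} {mΩ : MeasurableSpace Ω} {mΩ' : MeasurableSpace Ω'}
  {μ : Measure Ω} {μ' : Measure Ω'} {F : Filtration ℕ mΩ} {F' : Filtration ℕ mΩ'}
  {f : ℕ → ℝ → ℝ} {Z : ℕ → Ω → ℕ} {Z' : ℕ → Ω' → ℕ}

lemma measurable (hZ : IsBranchingProcess μ F f Z) (n : ℕ) : Measurable (Z n) :=
  (hZ.2.2.1 n).mono (F.le n) le_rfl

lemma integral_pow_zero [IsProbabilityMeasure μ] (hZ : IsBranchingProcess μ F f Z) (t : ℝ) :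
    ∫ ω, t ^ Z 0 ω ∂μ = t := by
  simp [hZ.1]

lemma integral_pow_succ [IsFiniteMeasure μ] (hZ : IsBranchingProcess μ F f Z) (n : ℕ) {t : ℝ}
    (ht : t ∈ Icc (0 : ℝ) 1) :
    ∫ ω, t ^ Z (n + 1) ω ∂μ = ∫ ω, f n t ^ Z n ω ∂μ := by
  rw [← integral_condExp (F.le n)]
  exact integral_congr_ae (hZ.2.2.2 n t ht)

lemma integral_pow_succ_eq_apply_integral_pow_shift
    [IsProbabilityMeasure μ] [IsProbabilityMeasure μ']
    (hf : ∀ i, MapsTo (f (1 + i)) (Icc 0 1) (Icc 0 1)) (hZ : IsBranchingProcess μ F f Z)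
    (hZ' : IsBranchingProcess μ' F' (fun i => f (1 + i)) Z') (n : ℕ) {t : ℝ}
    (ht : t ∈ Icc (0 : ℝ) 1) :
    ∫ ω, t ^ Z (n + 1) ω ∂μ = f 0 (∫ ω, t ^ Z' n ω ∂μ') := by
  induction n generalizing t with
  | zero => rw [hZ.integral_pow_succ 0 ht, hZ.integral_pow_zero, hZ'.integral_pow_zero]
  | succ n ih =>
    rw [hZ.integral_pow_succ (n + 1) ht, hZ'.integral_pow_succ n ht, ← ih (hf n ht),
      add_comm 1 n]

lemma tendsto_integral_expNeg_mul [IsFiniteMeasure μ] (hZ : IsBranchingProcess μ F f Z)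
    {c : ℕ → ℝ≥0∞} {W : Ω → ℝ≥0∞}
    (hW : ∀ᵐ ω ∂μ, Tendsto (fun n => Z n ω * c n) atTop (𝓝 (W ω))) :
    Tendsto (fun n => ∫ ω, expNeg (Z n ω * c n) ∂μ) atTop (𝓝 (∫ ω, expNeg (W ω) ∂μ)) :=
  tendsto_integral_expNeg
    (fun n => ((measurable_from_nat.comp (hZ.measurable n)).mul_const (c n)).aemeasurable) hW

end IsBranchingProcess

theorem laplace_functional_equation_general
    {Ω Ω' : Type*} {mΩ : MeasurableSpace Ω} {mΩ' : MeasurableSpace Ω'}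
    {μ : Measure Ω} [IsProbabilityMeasure μ] {μ' : Measure Ω'} [IsProbabilityMeasure μ']
    {F : Filtration ℕ mΩ} {F' : Filtration ℕ mΩ'}
    {f : ℕ → ℝ → ℝ} (hf : ∀ i, IsPGF (f i))
    {Z : ℕ → Ω → ℕ} (hZ : IsBranchingProcess μ F f Z)
    {Z' : ℕ → Ω' → ℕ} (hZ' : IsBranchingProcess μ' F' (fun i => f (1 + i)) Z')
    {c : ℕ → ℝ≥0∞} {W : Ω → ℝ≥0∞} {W' : Ω' → ℝ≥0∞}
    (hW : ∀ᵐ ω ∂μ, Tendsto (fun n => Z n ω * c n) atTop (𝓝 (W ω)))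
    (hW' : ∀ᵐ ω ∂μ', Tendsto (fun n => Z' n ω * c (n + 1)) atTop (𝓝 (W' ω))) :
    ∫ ω, expNeg (W ω) ∂μ = f 0 (∫ ω, expNeg (W' ω) ∂μ') := by
  have laplace_succ (n : ℕ) : ∫ ω, expNeg (Z (n + 1) ω * c (n + 1)) ∂μ
      = f 0 (∫ ω, expNeg (Z' n ω * c (n + 1)) ∂μ') := by
    simp only [expNeg_natCast_mul]
    exact hZ.integral_pow_succ_eq_apply_integral_pow_shift (fun i => (hf (1 + i)).mapsTo_Icc) hZ' n
      (expNeg_mem_Icc _)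
  have tendsto_laplace : Tendsto (fun n => ∫ ω, expNeg (Z (n + 1) ω * c (n + 1)) ∂μ) atTop
      (𝓝 (∫ ω, expNeg (W ω) ∂μ)) :=
    (hZ.tendsto_integral_expNeg_mul hW).comp (tendsto_add_atTop_nat 1)
  have tendsto_laplace_shift : Tendsto (fun n => ∫ ω, expNeg (Z' n ω * c (n + 1)) ∂μ') atTop
      (𝓝[Icc 0 1] ∫ ω, expNeg (W' ω) ∂μ') :=
    tendsto_nhdsWithin_iff.2 ⟨hZ'.tendsto_integral_expNeg_mul hW',
      Eventually.of_forall fun _ => integral_expNeg_mem_Icc _⟩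
  have f_zero_continuous := (hf 0).continuousOn _ (integral_expNeg_mem_Icc (μ := μ') W')
  simp only [laplace_succ] at tendsto_laplace
  exact tendsto_nhds_unique tendsto_laplace (f_zero_continuous.tendsto.comp tendsto_laplace_shift)

lemma tendsto_natCast_mul_const_mul_ofReal {ι : Type*} {l : Filter ι} {k : ι → ℕ} {a : ι → ℝ}
    {b w : ℝ≥0∞} (hb : b ≠ ∞) (h : Tendsto (fun i => ENNReal.ofReal (k i * a i)) l (𝓝 w)) :
    Tendsto (fun i => k i * (b * ENNReal.ofReal (a i))) l (𝓝 (b * w)) := by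
  refine (ENNReal.Tendsto.const_mul h (Or.inr hb)).congr fun i => ?_
  rw [ENNReal.ofReal_mul (Nat.cast_nonneg _), ENNReal.ofReal_natCast, mul_left_comm]

/-- Let `(Z n)` be a branching process in the fixed environment `(f i)`
and `(Z' n)` one in the shifted environment `(f (1+i))`, with a.s. limits
`W s = lim Z n · h_n(s)` and `W' s = lim Z' n · h_n(θ,s)`. Then for every `u > 0` and
`s ∈ (0,∞)` the Laplace transforms `χ(u;s) = E[exp(-u·W s)]` and
`χ'(u;s) = E[exp(-u·W' s)]` satisfy `χ(u;s) = f 0 (χ'(u; h_0(s)))`. -/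
theorem laplace_functional_equation
    {Ω Ω' : Type*} {mΩ : MeasurableSpace Ω} {mΩ' : MeasurableSpace Ω'}
    (μ : Measure Ω) [IsProbabilityMeasure μ] (μ' : Measure Ω') [IsProbabilityMeasure μ']
    (F : Filtration ℕ mΩ) (F' : Filtration ℕ mΩ')
    (f g : ℕ → ℝ → ℝ) (hf : ∀ i, IsPGF (f i)) (hg : ∀ i, IsInvOn01 (g i) (f i))
    (Z : ℕ → Ω → ℕ) (hZ : IsBranchingProcess μ F f Z)
    (Z' : ℕ → Ω' → ℕ) (hZ' : IsBranchingProcess μ' F' (fun i => f (1 + i)) Z')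
    (W : ℝ → Ω → ℝ≥0∞) (W' : ℝ → Ω' → ℝ≥0∞)
    (hW : ∀ s, 0 < s → ∀ᵐ ω ∂μ,
      Tendsto (fun n => ENNReal.ofReal ((Z n ω : ℝ) * hIter g n s)) atTop (𝓝 (W s ω)))
    (hW' : ∀ s, 0 < s → ∀ᵐ ω ∂μ',
      Tendsto (fun n => ENNReal.ofReal ((Z' n ω : ℝ) * hIter (fun i => g (1 + i)) n s))
        atTop (𝓝 (W' s ω))) :
    ∀ u, 0 < u → ∀ s, 0 < s →
      ∫ ω, expNeg (ENNReal.ofReal u * W s ω) ∂μ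
        = f 0 (∫ ω, expNeg (ENNReal.ofReal u * W' (hfun (g 0) s) ω) ∂μ') := by
  intro u _ s hs
  refine laplace_functional_equation_general hf hZ hZ'
    (c := fun n => ENNReal.ofReal u * ENNReal.ofReal (hIter g n s))
    ((hW s hs).mono fun _ => tendsto_natCast_mul_const_mul_ofReal ENNReal.ofReal_ne_top) ?_
  simp only [hIter_succ_eq_hIter_shift]
  exact (hW' _ (hfun_pos (hf 0) (hg 0) hs)).mono fun _ =>
    tendsto_natCast_mul_const_mul_ofReal ENNReal.ofReal_ne_top

end
end

section
/- Let U:[0,∞)→[0,∞) be an increasing slowly varying function with U(0)=0 and lim_{x→∞}U(x)=∞, and define V(x) := inf{y ≥ 0 : U(y) ≥ x} for 0 ≤ x < ∞. Then U(V(x)) ∼ x as x → ∞, i.e. lim_{x→∞} U(V(x))/x = 1. -/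
open MeasureTheory Filter Topology Set
open scoped ENNReal

noncomputable section

/-!
Since `U` is monotone, `U (c * V x) ≤ x` for `c < 1` and `x ≤ U (c * V x)` for `c > 1`, even where
`U` jumps at `V x`. As `V x → ∞`, slow variation makes both bounds asymptotic to `U (V x)`, so
`x` is squeezed between them.
-/

section GeneralizedInverse

variable {U : ℝ → ℝ} {x y : ℝ}

lemma exists_nonneg_le_apply_of_tendsto_atTop (htop : Tendsto U atTop atTop) (x : ℝ) :
    ∃ y, 0 ≤ y ∧ x ≤ U y :=
  ((eventually_ge_atTop 0).and (htop.eventually_ge_atTop x)).exists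

lemma Vfun_le (hy : 0 ≤ y) (hxy : x ≤ U y) : Vfun U x ≤ y :=
  csInf_le ⟨0, fun _ hz => hz.1⟩ ⟨hy, hxy⟩

lemma apply_lt_of_lt_Vfun (hy : 0 ≤ y) (hlt : y < Vfun U x) : U y < x :=
  lt_of_not_ge fun hxy => hlt.not_ge (Vfun_le hy hxy)

lemma le_apply_of_Vfun_lt (hmono : MonotoneOn U (Ici 0)) (hne : ∃ z, 0 ≤ z ∧ x ≤ U z)
    (hlt : Vfun U x < y) : x ≤ U y := by
  obtain ⟨z, ⟨hz, hxz⟩, hzy⟩ := exists_lt_of_csInf_lt hne hlt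
  exact hxz.trans (hmono hz (hz.trans hzy.le) hzy.le)

lemma tendsto_Vfun_atTop (hmono : MonotoneOn U (Ici 0)) (htop : Tendsto U atTop atTop) :
    Tendsto (Vfun U) atTop atTop := by
  refine tendsto_atTop.2 fun b => ?_
  filter_upwards [eventually_gt_atTop (U b)] with x hx
  exact le_of_not_gt fun hlt => hx.not_ge
    (le_apply_of_Vfun_lt hmono (exists_nonneg_le_apply_of_tendsto_atTop htop x) hlt)

end GeneralizedInverse

lemma SlowlyVarying.tendsto_comp_div_comp_const_mul {U : ℝ → ℝ} (hsv : SlowlyVarying U)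
    {α : Type*} {l : Filter α} {v : α → ℝ} (hv : Tendsto v l atTop) {c : ℝ} (hc : 0 < c) :
    Tendsto (fun a => U (v a) / U (c * v a)) l (𝓝 1) := by
  simpa only [Function.comp_apply, inv_div, inv_one] using
    ((hsv c hc).comp hv).inv₀ one_ne_zero

/-- Let `U : [0,∞) → [0,∞)` be an increasing slowly varying function
with `U 0 = 0` and `U x → ∞`, and `V x = inf{y ≥ 0 : U y ≥ x}`. Then `U (V x) ∼ x`
as `x → ∞`. -/
theorem slowly_varying_inverse_asymptotic
    (U : ℝ → ℝ) (hmap : ∀ x, 0 ≤ x → 0 ≤ U x) (hmono : MonotoneOn U (Set.Ici 0))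
    (h0 : U 0 = 0) (htop : Tendsto U atTop atTop) (hsv : SlowlyVarying U) :
    Tendsto (fun x => U (Vfun U x) / x) atTop (𝓝 1) := by
  have hV : Tendsto (Vfun U) atTop atTop := tendsto_Vfun_atTop hmono htop
  have hVpos : ∀ᶠ x in atTop, 0 < Vfun U x := hV.eventually_gt_atTop 0
  have hhalfpos : ∀ᶠ x in atTop, 0 < U (1 / 2 * Vfun U x) :=
    (htop.comp (hV.const_mul_atTop one_half_pos)).eventually_gt_atTop 0
  refine tendsto_of_tendsto_of_tendsto_of_le_of_le'
    (hsv.tendsto_comp_div_comp_const_mul hV two_pos)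
    (hsv.tendsto_comp_div_comp_const_mul hV one_half_pos) ?_ ?_
  · filter_upwards [hVpos, eventually_gt_atTop 0] with x hVx hx
    have hle : x ≤ U (2 * Vfun U x) :=
      le_apply_of_Vfun_lt hmono (exists_nonneg_le_apply_of_tendsto_atTop htop x) (by linarith)
    exact div_le_div_of_nonneg_left (hmap _ hVx.le) hx hle
  · filter_upwards [hVpos, hhalfpos] with x hVx hUx
    have hlt : U (1 / 2 * Vfun U x) < x := apply_lt_of_lt_Vfun (by positivity) (by linarith)
    exact div_le_div_of_nonneg_left (hmap _ hVx.le) hUx hlt.le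

end
end

section
/- A point s ∈ (0,∞) is regular for (f_i) if and only if ∏_{n=0}^{∞} Q_n(f_{n+1}^{(−1)}(e^{−s})) = 0, where Q_i(x) := f_i'(x)(1−x)/(1−f_i(x)) for x ∈ [0,1) and f_{n}^{(−1)} is the inverse on [0,1] of the composition f_n(x) = f_0(f_1(⋯(f_{n−1}(x))⋯)). -/
open MeasureTheory Filter Topology Set
open scoped ENNReal

noncomputable section

/-!
Geometric convexity, `φ (x ^ a * y ^ b) ≤ φ x ^ a * φ y ^ b` for `a + b = 1`, holds for power series
with nonnegative coefficients by Hölder's inequality. Hence a generating function and its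
derivative are both geometrically convex, and by the chain rule this passes to the compositions
`F_N = f_0 ∘ ⋯ ∘ f_{N-1}`. The functional `Q` is multiplicative along compositions, so with
`x_N = F_N⁻¹(e^{-s}) = e^{-h_N(s)}` the `N`-th partial product is `Q_{F_N}(x_N)`.

If `h_N(t) / h_N(s)` is small, then `1 - e^{-h_N(t)}` is negligible against `1 - x_N`, and the
tangent to `F_N` at `x_N` shows that the product is at most a constant times `e^{-t} - e^{-s}`;
let `t ↑ s`. Conversely, if `h_N(t) ≥ c h_N(s)`, then geometric convexity of `F_N'` bounds
`e^{-t} - e^{-s} ≤ F_N(x_N ^ c) - F_N(x_N)` by `(2 / c) Q_{F_N}(x_N) ^ (c / 2)`, so if this happens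
for infinitely many `N`, the products do not tend to `0`.
-/

/-- Geometric (multiplicative) convexity: `φ` is convex in logarithmic coordinates on both sides.
As for `ConvexOn`, the condition includes that `s` is closed under weighted geometric means. -/
def GeomConvexOn (s : Set ℝ) (φ : ℝ → ℝ) : Prop :=
  ∀ ⦃x⦄, x ∈ s → ∀ ⦃y⦄, y ∈ s → ∀ ⦃a b : ℝ⦄, 0 < a → 0 < b → a + b = 1 →
    x ^ a * y ^ b ∈ s ∧ φ (x ^ a * y ^ b) ≤ φ x ^ a * φ y ^ b

theorem GeomConvexOn.comp {s t : Set ℝ} {φ ψ : ℝ → ℝ} (hφ : GeomConvexOn t φ)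
    (hφ_mono : MonotoneOn φ t) (hψ : GeomConvexOn s ψ) (hst : MapsTo ψ s t) :
    GeomConvexOn s (φ ∘ ψ) := by
  intro x hx y hy a b ha hb hab
  obtain ⟨hmem, hle⟩ := hψ hx hy ha hb hab
  obtain ⟨hmem', hle'⟩ := hφ (hst hx) (hst hy) ha hb hab
  exact ⟨hmem, (hφ_mono (hst hmem) hmem' hle).trans hle'⟩

theorem GeomConvexOn.mul {s : Set ℝ} {φ ψ : ℝ → ℝ} (hφ : GeomConvexOn s φ)
    (hψ : GeomConvexOn s ψ) (hφ_nonneg : ∀ x ∈ s, 0 ≤ φ x) (hψ_nonneg : ∀ x ∈ s, 0 ≤ ψ x) :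
    GeomConvexOn s (φ * ψ) := by
  intro x hx y hy a b ha hb hab
  obtain ⟨hmem, hφ_le⟩ := hφ hx hy ha hb hab
  refine ⟨hmem, ?_⟩
  calc φ (x ^ a * y ^ b) * ψ (x ^ a * y ^ b)
      ≤ (φ x ^ a * φ y ^ b) * (ψ x ^ a * ψ y ^ b) :=
        mul_le_mul hφ_le (hψ hx hy ha hb hab).2 (hψ_nonneg _ hmem)
          ((hφ_nonneg _ hmem).trans hφ_le)
    _ = (φ x * ψ x) ^ a * (φ y * ψ y) ^ b := by
        rw [Real.mul_rpow (hφ_nonneg x hx) (hψ_nonneg x hx),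
          Real.mul_rpow (hφ_nonneg y hy) (hψ_nonneg y hy)]
        ring

theorem GeomConvexOn.congr {s : Set ℝ} {φ ψ : ℝ → ℝ} (hφ : GeomConvexOn s φ) (h : EqOn φ ψ s) :
    GeomConvexOn s ψ := by
  intro x hx y hy a b ha hb hab
  obtain ⟨hmem, hle⟩ := hφ hx hy ha hb hab
  exact ⟨hmem, by rwa [← h hmem, ← h hx, ← h hy]⟩

theorem rpow_mul_rpow_mem_Ioo {x y a b : ℝ} (hx : x ∈ Ioo (0 : ℝ) 1) (hy : y ∈ Ioo (0 : ℝ) 1)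
    (ha : 0 < a) (hb : 0 < b) : x ^ a * y ^ b ∈ Ioo (0 : ℝ) 1 :=
  ⟨mul_pos (Real.rpow_pos_of_pos hx.1 a) (Real.rpow_pos_of_pos hy.1 b),
    mul_lt_one_of_nonneg_of_lt_one_left (Real.rpow_nonneg hx.1.le a)
      (Real.rpow_lt_one hx.1.le hx.2 ha) (Real.rpow_lt_one hy.1.le hy.2 hb).le⟩

theorem mul_one_sub_le_one_sub_rpow {x r : ℝ} (hx : 0 ≤ x) (hr0 : 0 ≤ r) (hr1 : r ≤ 1) :
    r * (1 - x) ≤ 1 - x ^ r := by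
  have hbernoulli := rpow_one_add_le_one_add_mul_self (s := x - 1) (by linarith) hr0 hr1
  rw [add_sub_cancel] at hbernoulli
  linarith

theorem exp_neg_mem_Ioo {u : ℝ} (hu : 0 < u) : Real.exp (-u) ∈ Ioo (0 : ℝ) 1 :=
  ⟨Real.exp_pos _, Real.exp_lt_one_iff.2 (neg_lt_zero.2 hu)⟩

theorem mul_exp_neg_le_one_sub_exp_neg (u : ℝ) : u * Real.exp (-u) ≤ 1 - Real.exp (-u) := by
  have hcancel : Real.exp u * Real.exp (-u) = 1 := by
    rw [← Real.exp_add, add_neg_cancel, Real.exp_zero]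
  nlinarith [Real.add_one_le_exp u, Real.exp_pos (-u)]

theorem hasSum_le_rpow_mul_rpow {ι : Type*} {u v : ι → ℝ} {a b A B C : ℝ}
    (hu : ∀ i, 0 ≤ u i) (hv : ∀ i, 0 ≤ v i) (ha : 0 < a) (hb : 0 < b) (hab : a + b = 1)
    (hA : HasSum u A) (hB : HasSum v B) (hC : HasSum (fun i => u i ^ a * v i ^ b) C) :
    C ≤ A ^ a * B ^ b := by
  have hconj : (1 / a).HolderConjugate (1 / b) := by
    simpa only [one_div] using Real.HolderConjugate.inv_inv ha hb hab
  have cancel {z e : ℝ} (hz : 0 ≤ z) (he : 0 < e) : (z ^ e) ^ (1 / e) = z := by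
    rw [← Real.rpow_mul hz, mul_one_div_cancel he.ne', Real.rpow_one]
  obtain ⟨C', -, hC'_le, hC'⟩ := Real.inner_le_Lp_mul_Lq_hasSum_of_nonneg hconj
    (Real.rpow_nonneg (hA.nonneg hu) a) (Real.rpow_nonneg (hB.nonneg hv) b)
    (fun i => Real.rpow_nonneg (hu i) a) (fun i => Real.rpow_nonneg (hv i) b)
    (by simpa only [cancel (hu _) ha, cancel (hA.nonneg hu) ha] using hA)
    (by simpa only [cancel (hv _) hb, cancel (hB.nonneg hv) hb] using hB)
  rwa [hC.unique hC']

section PowerSeries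

variable {p : ℕ → ℝ} {f : ℝ → ℝ}

theorem geomConvexOn_of_hasSum_pow (hp : ∀ j, 0 ≤ p j)
    (hf : ∀ x ∈ Ioo (0 : ℝ) 1, HasSum (fun j => p j * x ^ j) (f x)) :
    GeomConvexOn (Ioo 0 1) f := by
  intro x hx y hy a b ha hb hab
  have hmem := rpow_mul_rpow_mem_Ioo hx hy ha hb
  refine ⟨hmem, hasSum_le_rpow_mul_rpow (fun j => mul_nonneg (hp j) (pow_nonneg hx.1.le j))
    (fun j => mul_nonneg (hp j) (pow_nonneg hy.1.le j)) ha hb hab (hf x hx) (hf y hy) ?_⟩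
  refine (hf _ hmem).congr_fun fun j => ?_
  have hpj : p j ^ a * p j ^ b = p j := by
    rw [← Real.rpow_add_of_nonneg (hp j) ha.le hb.le, hab, Real.rpow_one]
  rw [Real.mul_rpow (hp j) (pow_nonneg hx.1.le j), Real.mul_rpow (hp j) (pow_nonneg hy.1.le j),
    ← Real.rpow_pow_comm hx.1.le, ← Real.rpow_pow_comm hy.1.le, mul_pow]
  linear_combination ((x ^ a) ^ j * (y ^ b) ^ j) * hpj

theorem convexOn_of_hasSum_pow (hp : ∀ j, 0 ≤ p j)
    (hf : ∀ x ∈ Icc (0 : ℝ) 1, HasSum (fun j => p j * x ^ j) (f x)) :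
    ConvexOn ℝ (Icc 0 1) f := by
  refine ⟨convex_Icc 0 1, fun x hx y hy a b ha hb hab => ?_⟩
  refine hasSum_le (fun j => ?_) (hf _ (convex_Icc 0 1 hx hy ha hb hab))
    (((hf x hx).const_smul a).add ((hf y hy).const_smul b))
  have hpow := mul_le_mul_of_nonneg_left ((convexOn_pow j).2 hx.1 hy.1 ha hb hab) (hp j)
  simp only [smul_eq_mul] at hpow ⊢
  linarith

theorem strictMonoOn_of_hasSum_pow (hp : ∀ j, 0 ≤ p j) {k : ℕ} (hk : k ≠ 0) (hpk : p k ≠ 0)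
    (hf : ∀ x ∈ Icc (0 : ℝ) 1, HasSum (fun j => p j * x ^ j) (f x)) :
    StrictMonoOn f (Icc 0 1) := fun x hx y hy hxy =>
  hasSum_lt (i := k)
    (fun j => mul_le_mul_of_nonneg_left (pow_le_pow_left₀ hx.1 hxy.le j) (hp j))
    (mul_lt_mul_of_pos_left (pow_lt_pow_left₀ hxy hx.1 hk) ((hp k).lt_of_ne' hpk))
    (hf x hx) (hf y hy)

theorem hasDerivAt_of_hasSum_pow (hp : Summable p)
    (hf : ∀ x ∈ Ioo (0 : ℝ) 1, HasSum (fun j => p j * x ^ j) (f x)) {x : ℝ}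
    (hx : x ∈ Ioo (0 : ℝ) 1) :
    ∃ f', HasDerivAt f f' x ∧ HasSum (fun j : ℕ => (j + 1) * p (j + 1) * x ^ j) f' := by
  obtain ⟨r, hxr, hr1⟩ := exists_between hx.2
  have hr0 : 0 < r := hx.1.trans hxr
  obtain ⟨C, hC⟩ := hp.tendsto_atTop_zero.norm.bddAbove_range
  have hsummable : Summable fun j : ℕ => C * (j * r ^ (j - 1)) := by
    refine Summable.mul_left C ((summable_nat_add_iff 1).1 ?_)
    simpa using summable_choose_mul_geometric_of_norm_lt_one 1
      (show ‖r‖ < 1 by rwa [Real.norm_of_nonneg hr0.le])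
  have hbound (j : ℕ) (y : ℝ) (hy : y ∈ Ioo 0 r) :
      ‖p j * (j * y ^ (j - 1))‖ ≤ C * (j * r ^ (j - 1)) := by
    have hpow : y ^ (j - 1) ≤ r ^ (j - 1) := pow_le_pow_left₀ hy.1.le hy.2.le _
    have hy0 : 0 ≤ y ^ (j - 1) := pow_nonneg hy.1.le _
    rw [norm_mul, Real.norm_of_nonneg (mul_nonneg j.cast_nonneg hy0)]
    exact mul_le_mul (hC ⟨j, rfl⟩) (by gcongr) (by positivity)
      ((norm_nonneg _).trans (hC ⟨j, rfl⟩))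
  have hxmem : x ∈ Ioo 0 r := ⟨hx.1, hxr⟩
  have hderiv := hasDerivAt_tsum_of_isPreconnected hsummable isOpen_Ioo isPreconnected_Ioo
    (fun j y _ => (hasDerivAt_pow j y).const_mul (p j)) hbound hxmem (hf x hx).summable hxmem
  refine ⟨_, hderiv.congr_of_eventuallyEq ?_, ?_⟩
  · filter_upwards [isOpen_Ioo.mem_nhds hx] with y hy using (hf y hy).tsum_eq.symm
  · have hsum := (Summable.of_norm_bounded hsummable fun j => hbound j x hxmem).hasSum
    rw [← hasSum_nat_add_iff' 1] at hsum
    simpa [mul_assoc, mul_left_comm] using hsum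

end PowerSeries

theorem deriv_mul_sub_le_of_convexOn {S : Set ℝ} {f : ℝ → ℝ} {x y : ℝ} (hf : ConvexOn ℝ S f)
    (hx : x ∈ S) (hy : y ∈ S) (hfx : DifferentiableAt ℝ f x) :
    deriv f x * (y - x) ≤ f y - f x := by
  rcases lt_trichotomy x y with hxy | rfl | hyx
  · have := hf.deriv_le_slope hx hy hxy hfx
    rwa [slope_def_field, le_div_iff₀ (sub_pos.2 hxy)] at this
  · simp
  · have := hf.slope_le_deriv hy hx hyx hfx
    rw [slope_def_field, div_le_iff₀ (sub_pos.2 hyx)] at this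
    linarith

/-- Increasing convex self-maps of `[0,1]` fixing the endpoints which, together with their
derivative, are geometrically convex on `(0,1)`. This class contains the probability generating
functions and, unlike the set of maps satisfying `IsPGF`, the identity; it is closed under
composition. -/
structure IsGeomConvexMap (f : ℝ → ℝ) : Prop where
  map_zero : f 0 = 0
  map_one : f 1 = 1
  strictMonoOn : StrictMonoOn f (Icc 0 1)
  convexOn : ConvexOn ℝ (Icc 0 1) f
  differentiableAt : ∀ x ∈ Ioo (0 : ℝ) 1, DifferentiableAt ℝ f x
  geomConvexOn : GeomConvexOn (Ioo 0 1) f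
  geomConvexOn_deriv : GeomConvexOn (Ioo 0 1) (deriv f)

theorem IsPGF.isGeomConvexMap {f : ℝ → ℝ} (h : IsPGF f) : IsGeomConvexMap f := by
  obtain ⟨p, hp, hp0, -, hp_sum, hf⟩ := h
  have hf_Ioo : ∀ x ∈ Ioo (0 : ℝ) 1, HasSum (fun j => p j * x ^ j) (f x) :=
    fun x hx => hf x (Ioo_subset_Icc_self hx)
  obtain ⟨k, hpk⟩ : ∃ k, p k ≠ 0 := by
    by_contra! hzero
    exact one_ne_zero (hp_sum.unique (funext hzero ▸ hasSum_zero))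
  have hk : k ≠ 0 := by
    rintro rfl
    exact hpk hp0
  refine ⟨?_, ?_, strictMonoOn_of_hasSum_pow hp hk hpk hf, convexOn_of_hasSum_pow hp hf, ?_,
    geomConvexOn_of_hasSum_pow hp hf_Ioo, ?_⟩
  · refine (hf 0 (by simp)).unique ?_
    simpa [hp0] using hasSum_single (f := fun j => p j * (0 : ℝ) ^ j) 0 (by simp +contextual)
  · exact (hf 1 (by simp)).unique (by simpa using hp_sum)
  · intro x hx
    obtain ⟨f', hderiv, -⟩ := hasDerivAt_of_hasSum_pow hp_sum.summable hf_Ioo hx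
    exact hderiv.differentiableAt
  · refine geomConvexOn_of_hasSum_pow (p := fun j => (j + 1) * p (j + 1))
      (fun j => mul_nonneg (by positivity) (hp _)) fun x hx => ?_
    obtain ⟨f', hderiv, hsum⟩ := hasDerivAt_of_hasSum_pow hp_sum.summable hf_Ioo hx
    rwa [hderiv.deriv]

namespace IsGeomConvexMap

protected theorem id : IsGeomConvexMap id where
  map_zero := rfl
  map_one := rfl
  strictMonoOn := strictMonoOn_id
  convexOn := convexOn_id (convex_Icc 0 1)
  differentiableAt _ _ := differentiableAt_id
  geomConvexOn _ hx _ hy _ _ ha hb _ := ⟨rpow_mul_rpow_mem_Ioo hx hy ha hb, le_rfl⟩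
  geomConvexOn_deriv _ hx _ hy _ _ ha hb _ := ⟨rpow_mul_rpow_mem_Ioo hx hy ha hb, by simp⟩

variable {F f : ℝ → ℝ}

theorem mapsTo_Icc (hf : IsGeomConvexMap f) : MapsTo f (Icc 0 1) (Icc 0 1) := by
  simpa only [hf.map_zero, hf.map_one] using hf.strictMonoOn.monotoneOn.mapsTo_Icc

theorem mapsTo_Ioo (hf : IsGeomConvexMap f) : MapsTo f (Ioo 0 1) (Ioo 0 1) := by
  simpa only [hf.map_zero, hf.map_one] using hf.strictMonoOn.mapsTo_Ioo

theorem le_self (hf : IsGeomConvexMap f) {x : ℝ} (hx : x ∈ Icc (0 : ℝ) 1) : f x ≤ x := by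
  have := hf.convexOn.2 (left_mem_Icc.2 zero_le_one) (right_mem_Icc.2 zero_le_one)
    (sub_nonneg.2 hx.2) hx.1 (sub_add_cancel 1 x)
  simpa [hf.map_zero, hf.map_one] using this

theorem deriv_mul_sub_le (hf : IsGeomConvexMap f) {x y : ℝ} (hx : x ∈ Ioo (0 : ℝ) 1)
    (hy : y ∈ Icc (0 : ℝ) 1) : deriv f x * (y - x) ≤ f y - f x :=
  deriv_mul_sub_le_of_convexOn hf.convexOn (Ioo_subset_Icc_self hx) hy (hf.differentiableAt x hx)

theorem deriv_nonneg (hf : IsGeomConvexMap f) {x : ℝ} (hx : x ∈ Ioo (0 : ℝ) 1) :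
    0 ≤ deriv f x := by
  have htangent := hf.deriv_mul_sub_le hx (left_mem_Icc.2 zero_le_one)
  rw [hf.map_zero] at htangent
  nlinarith [hx.1, (hf.mapsTo_Ioo hx).1]

theorem monotoneOn_deriv (hf : IsGeomConvexMap f) : MonotoneOn (deriv f) (Ioo 0 1) :=
  (hf.convexOn.subset Ioo_subset_Icc_self (convex_Ioo 0 1)).monotoneOn_deriv hf.differentiableAt

theorem deriv_comp (hF : IsGeomConvexMap F) (hf : IsGeomConvexMap f) {x : ℝ}
    (hx : x ∈ Ioo (0 : ℝ) 1) : deriv (F ∘ f) x = deriv F (f x) * deriv f x :=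
  _root_.deriv_comp x (hF.differentiableAt _ (hf.mapsTo_Ioo hx)) (hf.differentiableAt x hx)

theorem convexOn_comp (hF : IsGeomConvexMap F) (hf : IsGeomConvexMap f) :
    ConvexOn ℝ (Icc 0 1) (F ∘ f) := by
  refine ⟨convex_Icc 0 1, fun x hx y hy a b ha hb hab => ?_⟩
  calc F (f (a • x + b • y))
      ≤ F (a • f x + b • f y) :=
        hF.strictMonoOn.monotoneOn (hf.mapsTo_Icc (convex_Icc 0 1 hx hy ha hb hab))
          (convex_Icc 0 1 (hf.mapsTo_Icc hx) (hf.mapsTo_Icc hy) ha hb hab)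
          (hf.convexOn.2 hx hy ha hb hab)
    _ ≤ a • F (f x) + b • F (f y) :=
        hF.convexOn.2 (hf.mapsTo_Icc hx) (hf.mapsTo_Icc hy) ha hb hab

theorem geomConvexOn_deriv_comp (hF : IsGeomConvexMap F) (hf : IsGeomConvexMap f) :
    GeomConvexOn (Ioo 0 1) (deriv (F ∘ f)) := by
  have houter : GeomConvexOn (Ioo 0 1) (deriv F ∘ f) :=
    hF.geomConvexOn_deriv.comp hF.monotoneOn_deriv hf.geomConvexOn hf.mapsTo_Ioo
  exact (houter.mul hf.geomConvexOn_deriv (fun x hx => hF.deriv_nonneg (hf.mapsTo_Ioo hx))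
    fun x hx => hf.deriv_nonneg hx).congr fun x hx => (hF.deriv_comp hf hx).symm

protected theorem comp (hF : IsGeomConvexMap F) (hf : IsGeomConvexMap f) :
    IsGeomConvexMap (F ∘ f) where
  map_zero := by rw [Function.comp_apply, hf.map_zero, hF.map_zero]
  map_one := by rw [Function.comp_apply, hf.map_one, hF.map_one]
  strictMonoOn := hF.strictMonoOn.comp hf.strictMonoOn hf.mapsTo_Icc
  convexOn := hF.convexOn_comp hf
  differentiableAt x hx :=
    (hF.differentiableAt _ (hf.mapsTo_Ioo hx)).comp x (hf.differentiableAt x hx)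
  geomConvexOn := hF.geomConvexOn.comp
    (hF.strictMonoOn.monotoneOn.mono Ioo_subset_Icc_self) hf.geomConvexOn hf.mapsTo_Ioo
  geomConvexOn_deriv := hF.geomConvexOn_deriv_comp hf

theorem Qfun_nonneg (hf : IsGeomConvexMap f) {x : ℝ} (hx : x ∈ Ioo (0 : ℝ) 1) : 0 ≤ Qfun f x :=
  div_nonneg (mul_nonneg (hf.deriv_nonneg hx) (sub_nonneg.2 hx.2.le))
    (sub_nonneg.2 (hf.mapsTo_Ioo hx).2.le)

theorem Qfun_mul_one_sub (hf : IsGeomConvexMap f) {x : ℝ} (hx : x ∈ Ioo (0 : ℝ) 1) :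
    Qfun f x * (1 - f x) = deriv f x * (1 - x) :=
  div_mul_cancel₀ _ (sub_pos.2 (hf.mapsTo_Ioo hx).2).ne'

theorem deriv_mul_one_sub_le_Qfun (hf : IsGeomConvexMap f) {x : ℝ} (hx : x ∈ Ioo (0 : ℝ) 1) :
    deriv f x * (1 - x) ≤ Qfun f x := by
  rw [← hf.Qfun_mul_one_sub hx]
  exact mul_le_of_le_one_right (hf.Qfun_nonneg hx) (sub_le_self 1 (hf.mapsTo_Ioo hx).1.le)

theorem Qfun_comp (hF : IsGeomConvexMap F) (hf : IsGeomConvexMap f) {x : ℝ}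
    (hx : x ∈ Ioo (0 : ℝ) 1) : Qfun (F ∘ f) x = Qfun F (f x) * Qfun f x := by
  have hfx : 1 - f x ≠ 0 := (sub_pos.2 (hf.mapsTo_Ioo hx).2).ne'
  simp only [Qfun, hF.deriv_comp hf hx, Function.comp_apply]
  field_simp

theorem map_rpow_mul_rpow_sub_le (hf : IsGeomConvexMap f) {x z a b : ℝ}
    (hx : x ∈ Ioo (0 : ℝ) 1) (hz : z ∈ Ioo (0 : ℝ) 1) (ha : 0 < a) (hb : 0 < b)
    (hab : a + b = 1) :
    f (z ^ a * x ^ b) - f x ≤ ((1 - x) / (1 - z)) ^ a * Qfun f x ^ b := by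
  have hx1 : 0 < 1 - x := sub_pos.2 hx.2
  have hz1 : 0 < 1 - z := sub_pos.2 hz.2
  obtain ⟨hy, hderiv⟩ := hf.geomConvexOn_deriv hz hx ha hb hab
  set y := z ^ a * x ^ b
  have hderiv_z : deriv f z ≤ (1 - z)⁻¹ := by
    have htangent := hf.deriv_mul_sub_le hz (right_mem_Icc.2 zero_le_one)
    rw [hf.map_one] at htangent
    rw [← one_div, le_div_iff₀ hz1]
    linarith [(hf.mapsTo_Ioo hz).1]
  have hdz := hf.deriv_nonneg hz
  have hdx := hf.deriv_nonneg hx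
  calc f y - f x
      ≤ deriv f y * (y - x) := by
        linarith [hf.deriv_mul_sub_le hy (Ioo_subset_Icc_self hx)]
    _ ≤ deriv f y * (1 - x) := by
        have := hf.deriv_nonneg hy
        gcongr
        exact hy.2.le
    _ ≤ (deriv f z ^ a * deriv f x ^ b) * (1 - x) := by gcongr
    _ = (deriv f z * (1 - x)) ^ a * (deriv f x * (1 - x)) ^ b := by
        rw [Real.mul_rpow hdz hx1.le, Real.mul_rpow hdx hx1.le, mul_mul_mul_comm,
          ← Real.rpow_add hx1, hab, Real.rpow_one]
    _ ≤ ((1 - x) / (1 - z)) ^ a * Qfun f x ^ b := by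
        rw [div_eq_inv_mul]
        gcongr
        exact hf.deriv_mul_one_sub_le_Qfun hx

theorem map_rpow_sub_le (hf : IsGeomConvexMap f) {x c : ℝ} (hx : x ∈ Ioo (0 : ℝ) 1)
    (hc : c ∈ Ioo (0 : ℝ) 1) : f (x ^ c) - f x ≤ 2 / c * Qfun f x ^ (c / 2) := by
  obtain ⟨hc0, hc1⟩ := hc
  have ha : 0 < 1 - c / 2 := by linarith
  -- Chosen so that `r * (1 - c / 2) + c / 2 = c`.
  set r := c / 2 / (1 - c / 2) with hr
  have hr_ge : c / 2 ≤ r := by rw [hr, le_div_iff₀ ha]; nlinarith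
  have hr_le : r ≤ 1 := by rw [hr, div_le_one ha]; linarith
  have hr0 : 0 < r := by positivity
  have hz : x ^ r ∈ Ioo (0 : ℝ) 1 :=
    ⟨Real.rpow_pos_of_pos hx.1 r, Real.rpow_lt_one hx.1.le hx.2 hr0⟩
  have hmean : (x ^ r) ^ (1 - c / 2) * x ^ (c / 2) = x ^ c := by
    rw [← Real.rpow_mul hx.1.le, ← Real.rpow_add hx.1, hr, div_mul_cancel₀ _ ha.ne', add_halves]
  have hratio : (1 - x) / (1 - x ^ r) ≤ 2 / c := by
    rw [div_le_div_iff₀ (sub_pos.2 hz.2) hc0]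
    nlinarith [hx.2, mul_one_sub_le_one_sub_rpow hx.1.le hr0.le hr_le]
  have hratio0 : 0 ≤ (1 - x) / (1 - x ^ r) :=
    div_nonneg (sub_nonneg.2 hx.2.le) (sub_nonneg.2 hz.2.le)
  have hone_le : 1 ≤ 2 / c := by rw [le_div_iff₀ hc0]; linarith
  have hfactor : ((1 - x) / (1 - x ^ r)) ^ (1 - c / 2) ≤ 2 / c :=
    (Real.rpow_le_rpow hratio0 hratio ha.le).trans
      (Real.rpow_le_self_of_one_le hone_le (by linarith))
  rw [← hmean]
  exact (hf.map_rpow_mul_rpow_sub_le hx hz ha (half_pos hc0) (sub_add_cancel 1 _)).trans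
    (mul_le_mul_of_nonneg_right hfactor (Real.rpow_nonneg (hf.Qfun_nonneg hx) _))

theorem map_exp_neg_sub_le (hf : IsGeomConvexMap f) {u v c : ℝ} (hu : 0 < u) (hv : 0 < v)
    (hc : c ∈ Ioo (0 : ℝ) 1) (hcuv : c * u ≤ v) :
    f (Real.exp (-v)) - f (Real.exp (-u)) ≤ 2 / c * Qfun f (Real.exp (-u)) ^ (c / 2) := by
  have hpow : Real.exp (-u) ^ c = Real.exp (-(c * u)) := by rw [← Real.exp_mul]; ring_nf
  have hmono : f (Real.exp (-v)) ≤ f (Real.exp (-u) ^ c) := by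
    rw [hpow]
    exact hf.strictMonoOn.monotoneOn (Ioo_subset_Icc_self (exp_neg_mem_Ioo hv))
      (Ioo_subset_Icc_self (exp_neg_mem_Ioo (mul_pos hc.1 hu)))
      (Real.exp_le_exp.2 (neg_le_neg hcuv))
  exact (sub_le_sub_right hmono _).trans (hf.map_rpow_sub_le (exp_neg_mem_Ioo hu) hc)

theorem Qfun_mul_le_map_exp_neg_sub (hf : IsGeomConvexMap f) {u v : ℝ} (hu : 0 < u)
    (hv : 0 < v) :
    Qfun f (Real.exp (-u)) * (1 - f (Real.exp (-u))) * (1 - v / u / f (Real.exp (-u))) ≤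
      f (Real.exp (-v)) - f (Real.exp (-u)) := by
  have hx := exp_neg_mem_Ioo hu
  have hy := exp_neg_mem_Ioo hv
  have hux := mul_exp_neg_le_one_sub_exp_neg u
  have hvy : 1 - v ≤ Real.exp (-v) := Real.one_sub_le_exp_neg v
  rw [hf.Qfun_mul_one_sub hx]
  set x := Real.exp (-u)
  set y := Real.exp (-v)
  have hfx := (hf.mapsTo_Ioo hx).1
  have hv_le : v ≤ (1 - x) * (v / u / f x) := by
    rw [div_div, ← mul_div_assoc, le_div_iff₀ (by positivity), mul_comm]
    gcongr
    exact (mul_le_mul_of_nonneg_left (hf.le_self (Ioo_subset_Icc_self hx)) hu.le).trans hux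
  calc deriv f x * (1 - x) * (1 - v / u / f x)
      = deriv f x * ((1 - x) - (1 - x) * (v / u / f x)) := by ring
    _ ≤ deriv f x * (y - x) := mul_le_mul_of_nonneg_left (by linarith) (hf.deriv_nonneg hx)
    _ ≤ f y - f x := hf.deriv_mul_sub_le hx (Ioo_subset_Icc_self hy)

end IsGeomConvexMap

theorem IsInvOn01.mapsTo_Ioo {f g : ℝ → ℝ} (hg : IsInvOn01 g f) (hf : IsGeomConvexMap f) :
    MapsTo g (Ioo 0 1) (Ioo 0 1) := by
  intro x hx
  obtain ⟨-, hfg, hg0, hg1⟩ := hg x (Ioo_subset_Icc_self hx)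
  refine ⟨hg0.lt_of_ne fun h => hx.1.ne ?_, hg1.lt_of_ne fun h => hx.2.ne ?_⟩
  · rw [← hfg, ← h, hf.map_zero]
  · rw [← hfg, h, hf.map_one]

/-- The composition `f_0 ∘ f_1 ∘ ⋯ ∘ f_{n-1}`, of which `fCompInv` is the inverse. -/
def fComp (f : ℕ → ℝ → ℝ) : ℕ → ℝ → ℝ
  | 0 => id
  | n + 1 => fComp f n ∘ f n

section Iterates

variable {f g : ℕ → ℝ → ℝ}

theorem isGeomConvexMap_fComp (hf : ∀ i, IsGeomConvexMap (f i)) :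
    ∀ n, IsGeomConvexMap (fComp f n)
  | 0 => .id
  | n + 1 => (isGeomConvexMap_fComp hf n).comp (hf n)

theorem fCompInv_mem_Ioo (hf : ∀ i, IsGeomConvexMap (f i)) (hg : ∀ i, IsInvOn01 (g i) (f i))
    {x : ℝ} (hx : x ∈ Ioo (0 : ℝ) 1) : ∀ n, fCompInv g n x ∈ Ioo (0 : ℝ) 1
  | 0 => hx
  | n + 1 => (hg n).mapsTo_Ioo (hf n) (fCompInv_mem_Ioo hf hg hx n)

theorem map_fCompInv_succ (hf : ∀ i, IsGeomConvexMap (f i)) (hg : ∀ i, IsInvOn01 (g i) (f i))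
    {x : ℝ} (hx : x ∈ Ioo (0 : ℝ) 1) (n : ℕ) :
    f n (fCompInv g (n + 1) x) = fCompInv g n x :=
  (hg n _ (Ioo_subset_Icc_self (fCompInv_mem_Ioo hf hg hx n))).2.1

theorem fComp_fCompInv (hf : ∀ i, IsGeomConvexMap (f i)) (hg : ∀ i, IsInvOn01 (g i) (f i))
    {x : ℝ} (hx : x ∈ Ioo (0 : ℝ) 1) (n : ℕ) :
    fComp f n (fCompInv g n x) = x := by
  induction n with
  | zero => rfl
  | succ n ih => rw [fComp, Function.comp_apply, map_fCompInv_succ hf hg hx, ih]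

theorem prod_Qfun_fCompInv (hf : ∀ i, IsGeomConvexMap (f i)) (hg : ∀ i, IsInvOn01 (g i) (f i))
    {x : ℝ} (hx : x ∈ Ioo (0 : ℝ) 1) (N : ℕ) :
    ∏ n ∈ Finset.range N, Qfun (f n) (fCompInv g (n + 1) x) =
      Qfun (fComp f N) (fCompInv g N x) := by
  induction N with
  | zero => simp [Qfun, fComp, fCompInv, (sub_pos.2 hx.2).ne']
  | succ N ih =>
    rw [Finset.prod_range_succ, ih, fComp, (isGeomConvexMap_fComp hf N).Qfun_comp (hf N)
      (fCompInv_mem_Ioo hf hg hx (N + 1)), map_fCompInv_succ hf hg hx]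

theorem fCompInv_exp_neg (hf : ∀ i, IsGeomConvexMap (f i)) (hg : ∀ i, IsInvOn01 (g i) (f i))
    {t : ℝ} (ht : 0 < t) (n : ℕ) :
    fCompInv g n (Real.exp (-t)) = Real.exp (-hIter g n t) := by
  induction n with
  | zero => rfl
  | succ n ih =>
    rw [hIter, hfun, neg_neg, ← ih]
    exact (Real.exp_log (fCompInv_mem_Ioo hf hg (exp_neg_mem_Ioo ht) (n + 1)).1).symm

theorem hIter_pos (hf : ∀ i, IsGeomConvexMap (f i)) (hg : ∀ i, IsInvOn01 (g i) (f i))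
    {t : ℝ} (ht : 0 < t) (n : ℕ) : 0 < hIter g n t := by
  have hlt := (fCompInv_mem_Ioo hf hg (exp_neg_mem_Ioo ht) n).2
  rwa [fCompInv_exp_neg hf hg ht, Real.exp_lt_one_iff, neg_lt_zero] at hlt

theorem fComp_exp_neg_hIter (hf : ∀ i, IsGeomConvexMap (f i)) (hg : ∀ i, IsInvOn01 (g i) (f i))
    {t : ℝ} (ht : 0 < t) (n : ℕ) :
    fComp f n (Real.exp (-hIter g n t)) = Real.exp (-t) := by
  rw [← fCompInv_exp_neg hf hg ht, fComp_fCompInv hf hg (exp_neg_mem_Ioo ht)]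

theorem Qfun_fComp_mul_le (hf : ∀ i, IsGeomConvexMap (f i)) (hg : ∀ i, IsInvOn01 (g i) (f i))
    {s t : ℝ} (hs : 0 < s) (ht : 0 < t) (n : ℕ) :
    Qfun (fComp f n) (Real.exp (-hIter g n s)) * (1 - Real.exp (-s)) *
        (1 - hIter g n t / hIter g n s / Real.exp (-s)) ≤ Real.exp (-t) - Real.exp (-s) := by
  simpa only [fComp_exp_neg_hIter hf hg hs, fComp_exp_neg_hIter hf hg ht] using
    (isGeomConvexMap_fComp hf n).Qfun_mul_le_map_exp_neg_sub (hIter_pos hf hg hs n)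
      (hIter_pos hf hg ht n)

theorem exp_neg_sub_le_Qfun_fComp (hf : ∀ i, IsGeomConvexMap (f i))
    (hg : ∀ i, IsInvOn01 (g i) (f i)) {s t c : ℝ} (hs : 0 < s) (ht : 0 < t) (hc : c ∈ Ioo (0 : ℝ) 1)
    {n : ℕ} (hst : c ≤ hIter g n t / hIter g n s) :
    Real.exp (-t) - Real.exp (-s) ≤
      2 / c * Qfun (fComp f n) (Real.exp (-hIter g n s)) ^ (c / 2) := by
  have hs_pos := hIter_pos hf hg hs n
  simpa only [fComp_exp_neg_hIter hf hg hs, fComp_exp_neg_hIter hf hg ht] using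
    (isGeomConvexMap_fComp hf n).map_exp_neg_sub_le hs_pos (hIter_pos hf hg ht n) hc
      ((le_div_iff₀ hs_pos).1 hst)

theorem tendsto_Qfun_fComp_of_analyticRegular (hf : ∀ i, IsGeomConvexMap (f i))
    (hg : ∀ i, IsInvOn01 (g i) (f i)) {s : ℝ} (hs : 0 < s) (hreg : AnalyticRegular g s) :
    Tendsto (fun N => Qfun (fComp f N) (Real.exp (-hIter g N s))) atTop (𝓝 0) := by
  have hQ_nonneg (N : ℕ) : 0 ≤ Qfun (fComp f N) (Real.exp (-hIter g N s)) :=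
    (isGeomConvexMap_fComp hf N).Qfun_nonneg (exp_neg_mem_Ioo (hIter_pos hf hg hs N))
  have hs1 : 0 < 1 - Real.exp (-s) := sub_pos.2 (exp_neg_mem_Ioo hs).2
  have hgap : Tendsto (fun t => Real.exp (-t) - Real.exp (-s)) (𝓝[<] s) (𝓝 0) := by
    have hcont : Continuous fun t => Real.exp (-t) - Real.exp (-s) := by fun_prop
    simpa only [sub_self] using (hcont.tendsto s).mono_left nhdsWithin_le_nhds
  refine tendsto_order.2 ⟨fun a ha => .of_forall fun N => ha.trans_le (hQ_nonneg N),
    fun ε hε => ?_⟩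
  obtain ⟨t, hgap_lt, ht, hts⟩ : ∃ t, Real.exp (-t) - Real.exp (-s) <
      ε * (1 - Real.exp (-s)) / 2 ∧ 0 < t ∧ t < s :=
    ((hgap.eventually_lt_const (by positivity)).and (Ioo_mem_nhdsLT hs)).exists
  filter_upwards [(hreg t ht hts).eventually_lt_const (half_pos (Real.exp_pos (-s)))] with N hN
  have hratio : 1 / 2 ≤ 1 - hIter g N t / hIter g N s / Real.exp (-s) := by
    have := (div_lt_iff₀ (Real.exp_pos (-s))).2 (hN.trans_eq (div_eq_inv_mul _ 2))
    linarith
  have hhalf := (mul_le_mul_of_nonneg_left hratio (mul_nonneg (hQ_nonneg N) hs1.le)).trans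
    (Qfun_fComp_mul_le hf hg hs ht N)
  exact lt_of_mul_lt_mul_right (by linarith) hs1.le

theorem analyticRegular_of_tendsto_Qfun_fComp (hf : ∀ i, IsGeomConvexMap (f i))
    (hg : ∀ i, IsInvOn01 (g i) (f i)) {s : ℝ} (hs : 0 < s)
    (hQ : Tendsto (fun N => Qfun (fComp f N) (Real.exp (-hIter g N s))) atTop (𝓝 0)) :
    AnalyticRegular g s := by
  intro t ht hts
  refine tendsto_order.2 ⟨fun a ha => .of_forall fun N =>
    ha.trans (div_pos (hIter_pos hf hg ht N) (hIter_pos hf hg hs N)), fun ε hε => ?_⟩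
  obtain ⟨c, hc0, hc⟩ := exists_between (lt_min hε one_pos)
  obtain ⟨hcε, hc1⟩ := lt_min_iff.1 hc
  have hbound : Tendsto (fun N => 2 / c * Qfun (fComp f N) (Real.exp (-hIter g N s)) ^ (c / 2))
      atTop (𝓝 0) := by
    have hpow := (hQ.rpow_const (Or.inr (half_pos hc0).le)).const_mul (2 / c)
    rwa [Real.zero_rpow (half_pos hc0).ne', mul_zero] at hpow
  have hgap : 0 < Real.exp (-t) - Real.exp (-s) :=
    sub_pos.2 (Real.exp_lt_exp.2 (neg_lt_neg hts))
  filter_upwards [hbound.eventually_lt_const hgap] with N hN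
  by_contra! hε_le
  exact (exp_neg_sub_le_Qfun_fComp hf hg hs ht ⟨hc0, hc1⟩ (hcε.le.trans hε_le)).not_gt hN

end Iterates

theorem regular_iff_infinite_product_zero_general
    (f g : ℕ → ℝ → ℝ) (hf : ∀ i, IsGeomConvexMap (f i)) (hg : ∀ i, IsInvOn01 (g i) (f i))
    (s : ℝ) (hs : 0 < s) :
    AnalyticRegular g s ↔
      Tendsto (fun N => ∏ n ∈ Finset.range N, Qfun (f n) (fCompInv g (n + 1) (Real.exp (-s))))
        atTop (𝓝 0) := by
  simp only [prod_Qfun_fCompInv hf hg (exp_neg_mem_Ioo hs)]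
  simp only [fCompInv_exp_neg hf hg hs]
  exact ⟨tendsto_Qfun_fComp_of_analyticRegular hf hg hs,
    analyticRegular_of_tendsto_Qfun_fComp hf hg hs⟩

/-- A point `s ∈ (0,∞)` is regular for `(f i)` if and only if
`∏_{n=0}^∞ Q_n(f_{n+1}^{(-1)}(e^{-s})) = 0`, where `Q i x = f_i'(x)(1-x)/(1-f_i(x))`
and `f_n^{(-1)}` is the inverse of the composition `f_0 ∘ f_1 ∘ ⋯ ∘ f_{n-1}`. -/
theorem regular_iff_infinite_product_zero
    (f g : ℕ → ℝ → ℝ) (hf : ∀ i, IsPGF (f i)) (hg : ∀ i, IsInvOn01 (g i) (f i))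
    (s : ℝ) (hs : 0 < s) :
    AnalyticRegular g s ↔
      Tendsto (fun N => ∏ n ∈ Finset.range N, Qfun (f n) (fCompInv g (n + 1) (Real.exp (-s))))
        atTop (𝓝 0) :=
  regular_iff_infinite_product_zero_general f g (fun i => (hf i).isGeomConvexMap) hg s hs

end
end

section
/- Let 0<ε<1, let (α_i)_{i≥0} be real numbers with 0 < α_i < 1−ε for all i, and set f_i(s) = 1 − (1−s)^{α_i} on [0,1]. Then: (i) for every s ∈ [0,1], the iterated inverse satisfies r_n(s) := 1 − f_{n−1}^{(−1)}(⋯(f_0^{(−1)}(1−s))⋯) = s^{1/(α_0 α_1 ⋯ α_{n−1})}; (ii) consequently d(s) := lim_n h_{n+1}(s)/h_n(θ,s) = 0 for every s ∈ (0,∞); (iii) with U(x) = log x and c_n = 1/(α_0 α_1 ⋯ α_{n−1}), one has lim_n U(1/h_n(s))/c_n = −log(1 − e^{−s}) ∈ (0,∞) for every s ∈ (0,∞). -/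
open MeasureTheory Filter Topology Set
open scoped ENNReal

noncomputable section

/-! Write `q = 1 - e^{-s}` and `c_n = 1/(α_0 ⋯ α_{n-1})`. Under the conjugation `y ↦ 1 - y` the
inverse `f_i^{(-1)}` is the power map `x ↦ x ^ (1/α_i)`, so the iterated inverse is `x ↦ x ^ c_n`.
Hence `h_n(s) = -log (1 - q ^ c_n) ~ q ^ c_n`, because `c_n → ∞` and `-log (1 - x) ~ x` at `0`. Both
limits are read off from this equivalence. If `b_n` belongs to the shifted sequence, then
`c_{n+1} = b_n / α_0`, so the ratio in (ii) is equivalent to `(q ^ b_n) ^ (1/α_0 - 1) → 0`; and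
(iii) follows from `log (q ^ c_n) / c_n = log q`. -/

section IsEquivalent

open scoped Asymptotics

theorem isEquivalent_neg_log_one_sub : (fun x : ℝ => -Real.log (1 - x)) ~[𝓝 0] id := by
  have hderiv : HasDerivAt (fun x : ℝ => -Real.log (1 - x)) 1 0 := by
    simpa using! (((hasDerivAt_id (0 : ℝ)).const_sub 1).log (by simp)).neg
  simpa using! hderiv.isLittleO

theorem tendsto_log_div_of_isEquivalent {ι : Type*} {l : Filter ι} {u v c : ι → ℝ} {L : ℝ}
    (huv : u ~[l] v) (hv : ∀ᶠ i in l, v i ≠ 0) (hc : Tendsto c l atTop)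
    (hlim : Tendsto (fun i => Real.log (v i) / c i) l (𝓝 L)) :
    Tendsto (fun i => Real.log (u i) / c i) l (𝓝 L) := by
  have hone : Tendsto (fun i => u i / v i) l (𝓝 1) :=
    (Asymptotics.isEquivalent_iff_tendsto_one hv).1 huv
  have hratio : Tendsto (fun i => Real.log (u i / v i) / c i) l (𝓝 0) :=
    (hone.log one_ne_zero).div_atTop hc
  have hsum := hratio.add hlim
  rw [zero_add] at hsum
  refine hsum.congr' ?_
  filter_upwards [hv, hone.eventually_ne one_ne_zero] with i hvi hratio_ne
  rw [← add_div, ← Real.log_mul hratio_ne hvi, div_mul_cancel₀ _ hvi]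

end IsEquivalent

theorem tendsto_prod_range_zero_of_le {α : ℕ → ℝ} {r : ℝ} (hr : r < 1) (hα : ∀ i, 0 ≤ α i)
    (hαr : ∀ i, α i ≤ r) : Tendsto (fun n => ∏ i ∈ Finset.range n, α i) atTop (𝓝 0) := by
  refine squeeze_zero (fun n => Finset.prod_nonneg fun i _ => hα i) (fun n => ?_)
    (tendsto_pow_atTop_nhds_zero_of_lt_one ((hα 0).trans (hαr 0)) hr)
  simpa using Finset.prod_le_prod (s := Finset.range n) (fun i _ => hα i) fun i _ => hαr i

theorem tendsto_inv_prod_range_atTop {α : ℕ → ℝ} (hα : ∀ i, 0 < α i)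
    (hprod : Tendsto (fun n => ∏ i ∈ Finset.range n, α i) atTop (𝓝 0)) :
    Tendsto (fun n => (∏ i ∈ Finset.range n, α i)⁻¹) atTop atTop :=
  (tendsto_nhdsWithin_iff.2
    ⟨hprod, .of_forall fun _ => Finset.prod_pos fun i _ => hα i⟩).inv_tendsto_nhdsGT_zero

theorem tendsto_prod_range_shift_zero {α : ℕ → ℝ} (hα0 : α 0 ≠ 0)
    (hprod : Tendsto (fun n => ∏ i ∈ Finset.range n, α i) atTop (𝓝 0)) :
    Tendsto (fun n => ∏ i ∈ Finset.range n, α (i + 1)) atTop (𝓝 0) := by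
  simpa [Finset.prod_range_succ', hα0] using
    ((tendsto_add_atTop_iff_nat 1).2 hprod).div_const (α 0)

theorem hIter_eq_neg_log_fCompInv {g : ℕ → ℝ → ℝ} {s : ℝ}
    (hpos : ∀ n, 0 < fCompInv g n (Real.exp (-s))) (n : ℕ) :
    hIter g n s = -Real.log (fCompInv g n (Real.exp (-s))) := by
  induction n with
  | zero => simp [hIter, fCompInv]
  | succ n ih => rw [hIter, hfun, ih, neg_neg, Real.exp_log (hpos n), fCompInv]

/-- The inverse `y ↦ 1 - (1 - y) ^ (1/a)` on `[0,1]` of the probability generating function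
`x ↦ 1 - (1 - x) ^ a`. -/
def powInv (a y : ℝ) : ℝ := 1 - (1 - y) ^ a⁻¹

theorem one_sub_fCompInv_powInv (α : ℕ → ℝ) {x : ℝ} (hx : 0 ≤ x) (n : ℕ) :
    1 - fCompInv (fun i => powInv (α i)) n (1 - x) = x ^ (∏ i ∈ Finset.range n, α i)⁻¹ := by
  induction n with
  | zero => simp [fCompInv]
  | succ n ih =>
    rw [fCompInv, powInv, ih, sub_sub_cancel, ← Real.rpow_mul hx, Finset.prod_range_succ, mul_inv]

theorem one_sub_exp_neg_mem_Ioo {s : ℝ} (hs : 0 < s) : 1 - Real.exp (-s) ∈ Ioo (0 : ℝ) 1 :=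
  ⟨sub_pos.2 (Real.exp_lt_one_iff.2 (neg_lt_zero.2 hs)), sub_lt_self 1 (Real.exp_pos _)⟩

section PowInv

open scoped Asymptotics

variable {α : ℕ → ℝ} {s : ℝ}

theorem hIter_powInv (hα : ∀ i, 0 < α i) (hs : 0 < s) (n : ℕ) :
    hIter (fun i => powInv (α i)) n s =
      -Real.log (1 - (1 - Real.exp (-s)) ^ (∏ i ∈ Finset.range n, α i)⁻¹) := by
  obtain ⟨hq0, hq1⟩ := one_sub_exp_neg_mem_Ioo hs
  have hclosed (m : ℕ) : fCompInv (fun i => powInv (α i)) m (Real.exp (-s)) =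
      1 - (1 - Real.exp (-s)) ^ (∏ i ∈ Finset.range m, α i)⁻¹ := by
    rw [← one_sub_fCompInv_powInv α hq0.le, sub_sub_cancel, sub_sub_cancel]
  have hpos (m : ℕ) : 0 < fCompInv (fun i => powInv (α i)) m (Real.exp (-s)) := by
    rw [hclosed, sub_pos]
    exact Real.rpow_lt_one hq0.le hq1 (inv_pos.2 (Finset.prod_pos fun i _ => hα i))
  rw [hIter_eq_neg_log_fCompInv hpos, hclosed]

theorem tendsto_rpow_inv_prod_range_zero (hα : ∀ i, 0 < α i)
    (hprod : Tendsto (fun n => ∏ i ∈ Finset.range n, α i) atTop (𝓝 0)) {q : ℝ}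
    (hq : q ∈ Ioo (0 : ℝ) 1) :
    Tendsto (fun n => q ^ (∏ i ∈ Finset.range n, α i)⁻¹) atTop (𝓝 0) :=
  (tendsto_rpow_atTop_of_base_lt_one q (neg_one_lt_zero.trans hq.1) hq.2).comp
    (tendsto_inv_prod_range_atTop hα hprod)

theorem hIter_powInv_isEquivalent (hα : ∀ i, 0 < α i)
    (hprod : Tendsto (fun n => ∏ i ∈ Finset.range n, α i) atTop (𝓝 0)) (hs : 0 < s) :
    (fun n => hIter (fun i => powInv (α i)) n s) ~[atTop]
      fun n => (1 - Real.exp (-s)) ^ (∏ i ∈ Finset.range n, α i)⁻¹ := by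
  simp only [hIter_powInv hα hs]
  exact isEquivalent_neg_log_one_sub.comp_tendsto
    (tendsto_rpow_inv_prod_range_zero hα hprod (one_sub_exp_neg_mem_Ioo hs))

theorem tendsto_hIter_powInv_succ_div_shift (hα : ∀ i, 0 < α i) (hα1 : α 0 < 1)
    (hprod : Tendsto (fun n => ∏ i ∈ Finset.range n, α i) atTop (𝓝 0)) (hs : 0 < s) :
    Tendsto (fun n => hIter (fun i => powInv (α i)) (n + 1) s /
      hIter (fun i => powInv (α (i + 1))) n s) atTop (𝓝 0) := by
  have hq := one_sub_exp_neg_mem_Ioo hs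
  have hprod' := tendsto_prod_range_shift_zero (hα 0).ne' hprod
  have hequiv := ((hIter_powInv_isEquivalent hα hprod hs).comp_tendsto
    (tendsto_add_atTop_nat 1)).div (hIter_powInv_isEquivalent (fun i => hα (i + 1)) hprod' hs)
  refine hequiv.symm.tendsto_nhds ?_
  have hexp : 0 < (α 0)⁻¹ - 1 := sub_pos.2 ((one_lt_inv₀ (hα 0)).2 hα1)
  have hpow := (tendsto_rpow_inv_prod_range_zero (fun i => hα (i + 1)) hprod' hq).rpow_const
    (Or.inr hexp.le)
  rw [Real.zero_rpow hexp.ne'] at hpow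
  refine hpow.congr fun n => ?_
  rw [Pi.div_apply, Function.comp_apply, ← Real.rpow_sub hq.1, ← Real.rpow_mul hq.1.le,
    Finset.prod_range_succ', mul_inv, mul_sub_one]

theorem tendsto_log_one_div_hIter_powInv (hα : ∀ i, 0 < α i)
    (hprod : Tendsto (fun n => ∏ i ∈ Finset.range n, α i) atTop (𝓝 0)) (hs : 0 < s) :
    Tendsto (fun n => Real.log (1 / hIter (fun i => powInv (α i)) n s) /
      (∏ i ∈ Finset.range n, α i)⁻¹) atTop (𝓝 (-Real.log (1 - Real.exp (-s)))) := by
  have hq0 := (one_sub_exp_neg_mem_Ioo hs).1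
  have hlog : Tendsto (fun n => Real.log (hIter (fun i => powInv (α i)) n s) /
      (∏ i ∈ Finset.range n, α i)⁻¹) atTop (𝓝 (Real.log (1 - Real.exp (-s)))) := by
    refine tendsto_log_div_of_isEquivalent (hIter_powInv_isEquivalent hα hprod hs)
      (.of_forall fun n => (Real.rpow_pos_of_pos hq0 _).ne')
      (tendsto_inv_prod_range_atTop hα hprod) (tendsto_const_nhds.congr fun n => ?_)
    have hc : (∏ i ∈ Finset.range n, α i)⁻¹ ≠ 0 :=
      inv_ne_zero (Finset.prod_pos fun i _ => hα i).ne'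
    rw [Real.log_rpow hq0, mul_div_cancel_left₀ _ hc]
  simpa only [one_div, Real.log_inv, neg_div] using hlog.neg

end PowInv

theorem example_power_pgf_general {α : ℕ → ℝ} (hα : ∀ i, 0 < α i) (hα1 : α 0 < 1)
    (hprod : Tendsto (fun n => ∏ i ∈ Finset.range n, α i) atTop (𝓝 0))
    {g : ℕ → ℝ → ℝ} (hgdef : ∀ i y, g i y = 1 - (1 - y) ^ (α i)⁻¹) :
    (∀ n : ℕ, ∀ s ∈ Set.Icc (0 : ℝ) 1,
      1 - fCompInv g n (1 - s) = s ^ (∏ i ∈ Finset.range n, α i)⁻¹) ∧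
    (∀ s : ℝ, 0 < s →
      Tendsto (fun n => hIter g (n + 1) s / hIter (fun i => g (i + 1)) n s) atTop (𝓝 0)) ∧
    (∀ s : ℝ, 0 < s →
      Tendsto (fun n => Real.log (1 / hIter g n s) / (∏ i ∈ Finset.range n, α i)⁻¹)
        atTop (𝓝 (-Real.log (1 - Real.exp (-s)))) ∧
      0 < -Real.log (1 - Real.exp (-s))) := by
  obtain rfl : g = fun i => powInv (α i) := funext₂ hgdef
  refine ⟨fun n s hs => one_sub_fCompInv_powInv α hs.1 n,
    fun s hs => tendsto_hIter_powInv_succ_div_shift hα hα1 hprod hs,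
    fun s hs => ⟨tendsto_log_one_div_hIter_powInv hα hprod hs, ?_⟩⟩
  obtain ⟨hq0, hq1⟩ := one_sub_exp_neg_mem_Ioo hs
  exact neg_pos.2 (Real.log_neg hq0 hq1)

/-- For `f i s = 1 - (1-s)^(α i)` with `0 < α i < 1 - ε`:
(i) the iterated inverse satisfies `r_n(s) = 1 - f_{n-1}^{(-1)}(⋯(f_0^{(-1)}(1-s))⋯)
 = s^{1/(α_0⋯α_{n-1})}` on `[0,1]`;
(ii) `d(s) = lim_n h_{n+1}(s)/h_n(θ,s) = 0` for every `s ∈ (0,∞)`;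
(iii) with `U x = log x` and `c n = 1/(α_0⋯α_{n-1})`,
`U(1/h_n(s))/c n → -log(1 - e^{-s}) ∈ (0,∞)` for every `s ∈ (0,∞)`. -/
theorem example_power_pgf
    (ε : ℝ) (hε0 : 0 < ε) (hε1 : ε < 1)
    (α : ℕ → ℝ) (hα : ∀ i, 0 < α i ∧ α i < 1 - ε)
    (f g : ℕ → ℝ → ℝ)
    (hfdef : ∀ i s, f i s = 1 - (1 - s) ^ (α i))
    (hgdef : ∀ i y, g i y = 1 - (1 - y) ^ (α i)⁻¹) :
    (∀ n : ℕ, ∀ s ∈ Set.Icc (0 : ℝ) 1,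
      1 - fCompInv g n (1 - s) = s ^ (∏ i ∈ Finset.range n, α i)⁻¹) ∧
    (∀ s : ℝ, 0 < s →
      Tendsto (fun n => hIter g (n + 1) s / hIter (fun i => g (i + 1)) n s) atTop (𝓝 0)) ∧
    (∀ s : ℝ, 0 < s →
      Tendsto (fun n => Real.log (1 / hIter g n s) / (∏ i ∈ Finset.range n, α i)⁻¹)
        atTop (𝓝 (-Real.log (1 - Real.exp (-s)))) ∧
      0 < -Real.log (1 - Real.exp (-s))) := by
  have hprod := tendsto_prod_range_zero_of_le (sub_lt_self 1 hε0) (fun i => (hα i).1.le)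
    fun i => (hα i).2.le
  exact example_power_pgf_general (fun i => (hα i).1) ((hα 0).2.trans (sub_lt_self 1 hε0))
    hprod hgdef

end
end
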